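/- Under the stated setup and assumptions, for every p ∈ [1,∞] the Schatten-p norm of the sines of the canonical angles between the column spaces of V_k and V̂ satisfies (Σ_{j=1}^k sin^p ν_j)^{1/p} ≤ γ_k^{2q+1} · (‖Σ_⊥‖_p / σ_k) · ‖Ω_2Ω_1†‖₂ (with the maximum of the sines on the left for p = ∞). -/

import Mathlib

open scoped ENNReal
open Matrix

/-- The `j`-th largest singular value (0-indexed) of a complex matrix,
obtained as the decreasingly sorted square roots of the eigenvalues of `Mᴴ * M`. -/
noncomputable def sval {m n : ℕ} (M : Matrix (Fin m) (Fin n) ℂ) (j : ℕ) : ℝ :=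
  (List.insertionSort (· ≥ ·)
    ((List.ofFn (Matrix.isHermitian_conjTranspose_mul_self M).eigenvalues).map Real.sqrt)).getD j 0

/-- The Schatten-`p` norm (`p = ∞` gives the spectral norm). -/
noncomputable def schatten {m n : ℕ} (p : ℝ≥0∞) (M : Matrix (Fin m) (Fin n) ℂ) : ℝ :=
  if p = ⊤ then sval M 0
  else (∑ j ∈ Finset.range n, sval M j ^ p.toReal) ^ (1 / p.toReal)

/-- Moore–Penrose pseudoinverse of a full-row-rank matrix. -/
noncomputable def rpinv {a b : ℕ} (M : Matrix (Fin a) (Fin b) ℂ) : Matrix (Fin b) (Fin a) ℂ :=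
  Mᴴ * (M * Mᴴ)⁻¹

/-- Rectangular diagonal matrix with entries `σ (off), σ (off+1), …` on the diagonal. -/
noncomputable def diagRect (σ : ℕ → ℝ) (off a b : ℕ) : Matrix (Fin a) (Fin b) ℂ :=
  Matrix.of fun i j => if (i : ℕ) = (j : ℕ) then (σ (off + (i : ℕ)) : ℂ) else 0

/-- The first `b` columns of a matrix with `b + c` columns. -/
def colsL {a b c : ℕ} (M : Matrix (Fin a) (Fin (b + c)) ℂ) : Matrix (Fin a) (Fin b) ℂ :=
  M.submatrix id (Fin.castAdd c)

/-- The last `c` columns of a matrix with `b + c` columns. -/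
def colsR {a b c : ℕ} (M : Matrix (Fin a) (Fin (b + c)) ℂ) : Matrix (Fin a) (Fin c) ℂ :=
  M.submatrix id (Fin.natAdd b)

/-!
Put `P = 1 - V̂V̂ᴴ` and `G = AᴴA`. Since `Aᴴ(AAᴴ)^q A = G^(q+1)`, the columns of `G^(q+1) Ω` lie in
the range of `V̂`, so `P` annihilates them. Multiplied on the right by `Ω₁†Σ_k^(-2(q+1))`, the
matrix `G^(q+1) Ω` becomes `V_k + V_⊥ (Σ_⊥ᵀΣ_⊥)^(q+1) Ω₂Ω₁† Σ_k^(-2(q+1))`, whence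
`P V_k = -P V_⊥ (Σ_⊥ᵀΣ_⊥)^q Σ_⊥ᵀ · Σ_⊥ · Ω₂Ω₁† Σ_k^(-2(q+1))`.
The Schatten norm of such a product is at most that of the middle factor `Σ_⊥` times the spectral
norms of the outer ones, because `σ_j(XMY) ≤ ‖X‖ σ_j(M) ‖Y‖` by the Courant–Fischer principle.
-/

section SingularValues

open Module

variable {𝕜 : Type*} [RCLike 𝕜]
  {D : Type*} [NormedAddCommGroup D] [InnerProductSpace 𝕜 D] [FiniteDimensional 𝕜 D]
  {E : Type*} [NormedAddCommGroup E] [InnerProductSpace 𝕜 E] [FiniteDimensional 𝕜 E]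
  {F : Type*} [NormedAddCommGroup F] [InnerProductSpace 𝕜 F] [FiniteDimensional 𝕜 F]
  {G : Type*} [NormedAddCommGroup G] [InnerProductSpace 𝕜 G] [FiniteDimensional 𝕜 G]

/-- An orthonormal basis of right singular vectors of `T`, ordered by decreasing singular value:
the coordinates in which `‖T x‖ ^ 2` is a diagonal quadratic form. -/
noncomputable def rightSingularBasis (T : E →ₗ[𝕜] F) : OrthonormalBasis (Fin (finrank 𝕜 E)) 𝕜 E :=
  T.isSymmetric_adjoint_comp_self.eigenvectorBasis rfl

theorem norm_sq_apply_eq_sum_singularValues (T : E →ₗ[𝕜] F) (x : E) :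
    ‖T x‖ ^ 2 = ∑ j : Fin (finrank 𝕜 E),
      T.singularValues j ^ 2 * ‖inner 𝕜 (rightSingularBasis T j) x‖ ^ 2 := by
  have hcoord (j : Fin (finrank 𝕜 E)) : inner 𝕜 (rightSingularBasis T j) (T.adjoint (T x)) =
      (T.singularValues j ^ 2 : ℝ) * inner 𝕜 (rightSingularBasis T j) x := by
    simpa only [rightSingularBasis, OrthonormalBasis.repr_apply_apply, LinearMap.comp_apply,
      T.sq_singularValues_fin rfl] using
      T.isSymmetric_adjoint_comp_self.eigenvectorBasis_apply_self_apply rfl x j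
  calc ‖T x‖ ^ 2 = RCLike.re (inner 𝕜 x (T.adjoint (T x))) := by
        rw [LinearMap.adjoint_inner_right, inner_self_eq_norm_sq]
    _ = RCLike.re (∑ j, inner 𝕜 x (rightSingularBasis T j) *
          inner 𝕜 (rightSingularBasis T j) (T.adjoint (T x))) := by
        rw [OrthonormalBasis.sum_inner_mul_inner]
    _ = _ := by
        simp only [map_sum, hcoord, mul_left_comm (inner 𝕜 x _), RCLike.re_ofReal_mul,
          inner_mul_symm_re_eq_norm, norm_mul, norm_inner_symm x, ← pow_two]

theorem norm_apply_le_of_forall_singularValues_le (T : E →ₗ[𝕜] F) {c : ℝ} (hc : 0 ≤ c) {x : E}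
    (h : ∀ j, inner 𝕜 (rightSingularBasis T j) x ≠ 0 → T.singularValues j ≤ c) :
    ‖T x‖ ≤ c * ‖x‖ := by
  refine le_of_sq_le_sq ?_ (by positivity)
  rw [mul_pow, norm_sq_apply_eq_sum_singularValues,
    ← (rightSingularBasis T).sum_sq_norm_inner_right, Finset.mul_sum]
  refine Finset.sum_le_sum fun j _ => ?_
  by_cases hj : inner 𝕜 (rightSingularBasis T j) x = 0
  · simp [hj]
  · have := h j hj
    have := T.singularValues_nonneg j
    gcongr

theorem le_norm_apply_of_forall_le_singularValues (T : E →ₗ[𝕜] F) {c : ℝ} (hc : 0 ≤ c) {x : E}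
    (h : ∀ j, inner 𝕜 (rightSingularBasis T j) x ≠ 0 → c ≤ T.singularValues j) :
    c * ‖x‖ ≤ ‖T x‖ := by
  refine le_of_sq_le_sq ?_ (norm_nonneg _)
  rw [mul_pow, norm_sq_apply_eq_sum_singularValues,
    ← (rightSingularBasis T).sum_sq_norm_inner_right, Finset.mul_sum]
  refine Finset.sum_le_sum fun j _ => ?_
  by_cases hj : inner 𝕜 (rightSingularBasis T j) x = 0
  · simp [hj]
  · have := h j hj
    gcongr

theorem exists_constraints_forall_norm_apply_le_singularValues (T : E →ₗ[𝕜] F) (i : ℕ) :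
    ∃ L : E →ₗ[𝕜] (Fin i → 𝕜), ∀ x, L x = 0 → ‖T x‖ ≤ T.singularValues i * ‖x‖ := by
  refine ⟨LinearMap.pi fun l => if hl : (l : ℕ) < finrank 𝕜 E then
    innerₛₗ 𝕜 (rightSingularBasis T ⟨l, hl⟩) else 0, fun x hx => ?_⟩
  refine norm_apply_le_of_forall_singularValues_le T (T.singularValues_nonneg i) fun j hj =>
    T.singularValues_antitone (not_lt.1 fun hji => hj ?_)
  simpa using congrFun hx ⟨j, hji⟩

theorem exists_ne_zero_singularValues_mul_norm_le (T : E →ₗ[𝕜] F) (i : Fin (finrank 𝕜 E))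
    (L : E →ₗ[𝕜] (Fin i → 𝕜)) : ∃ x ≠ 0, L x = 0 ∧ T.singularValues i * ‖x‖ ≤ ‖T x‖ := by
  let tail : E →ₗ[𝕜] (Finset.Ioi i → 𝕜) :=
    LinearMap.pi fun j => innerₛₗ 𝕜 (rightSingularBasis T j)
  have hdim : finrank 𝕜 ((Fin i → 𝕜) × (Finset.Ioi i → 𝕜)) < finrank 𝕜 E := by
    simp only [finrank_prod, finrank_fintype_fun_eq_card, Fintype.card_fin, Fintype.card_coe,
      Fin.card_Ioi]
    omega
  obtain ⟨x, hx, hx0⟩ :=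
    (Submodule.ne_bot_iff _).1 (LinearMap.ker_ne_bot_of_finrank_lt (f := L.prod tail) hdim)
  obtain ⟨hLx, htail⟩ := Prod.mk_eq_zero.1 (LinearMap.mem_ker.1 hx)
  refine ⟨x, hx0, hLx, le_norm_apply_of_forall_le_singularValues T (T.singularValues_nonneg i)
    fun j hj => T.singularValues_antitone (not_lt.1 fun hij => hj ?_)⟩
  exact congrFun htail ⟨j, Finset.mem_Ioi.2 hij⟩

/-- The Courant–Fischer principle, with `i` linear constraints in place of a subspace of codimension
at most `i`: constraints can be pulled back along any linear map. -/
theorem singularValues_le_iff_exists_constraints (T : E →ₗ[𝕜] F) (i : ℕ) {c : ℝ} (hc : 0 ≤ c) :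
    T.singularValues i ≤ c ↔
      ∃ L : E →ₗ[𝕜] (Fin i → 𝕜), ∀ x, L x = 0 → ‖T x‖ ≤ c * ‖x‖ := by
  constructor
  · intro h
    obtain ⟨L, hL⟩ := exists_constraints_forall_norm_apply_le_singularValues T i
    exact ⟨L, fun x hx => (hL x hx).trans (by gcongr)⟩
  · rintro ⟨L, hL⟩
    rcases lt_or_ge i (finrank 𝕜 E) with hi | hi
    · obtain ⟨x, hx0, hLx, hx⟩ := exists_ne_zero_singularValues_mul_norm_le T ⟨i, hi⟩ L
      exact le_of_mul_le_mul_right (hx.trans (hL x hLx)) (norm_pos_iff.2 hx0)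
    · rwa [T.singularValues_of_finrank_le hi]

theorem singularValues_comp_comp_le (X : F →L[𝕜] G) (T : E →ₗ[𝕜] F) (Y : D →L[𝕜] E) (i : ℕ) :
    (X.toLinearMap ∘ₗ T ∘ₗ Y.toLinearMap).singularValues i ≤ ‖X‖ * T.singularValues i * ‖Y‖ := by
  have hT := T.singularValues_nonneg i
  obtain ⟨L, hL⟩ := (singularValues_le_iff_exists_constraints T i hT).1 le_rfl
  refine (singularValues_le_iff_exists_constraints _ i (by positivity)).2
    ⟨L ∘ₗ Y.toLinearMap, fun x hx => ?_⟩
  calc ‖X (T (Y x))‖ ≤ ‖X‖ * ‖T (Y x)‖ := X.le_opNorm _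
    _ ≤ ‖X‖ * (T.singularValues i * (‖Y‖ * ‖x‖)) := by
        gcongr
        exact (hL _ hx).trans (by gcongr; exact Y.le_opNorm x)
    _ = ‖X‖ * T.singularValues i * ‖Y‖ * ‖x‖ := by ring

theorem opNorm_le_singularValues_zero (T : E →L[𝕜] F) : ‖T‖ ≤ T.toLinearMap.singularValues 0 := by
  have hT := T.toLinearMap.singularValues_nonneg 0
  obtain ⟨L, hL⟩ := (singularValues_le_iff_exists_constraints T.toLinearMap 0 hT).1 le_rfl
  exact T.opNorm_le_bound hT fun x => hL x (Subsingleton.elim _ _)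

end SingularValues

section Schatten

open scoped Matrix.Norms.L2Operator

variable {m n a b : ℕ}

theorem perm_ofFn_comp_equiv {α : Type*} (e : Fin m ≃ Fin n) (f : Fin n → α) :
    (List.ofFn (f ∘ e)).Perm (List.ofFn f) := by
  obtain rfl := Fin.equiv_iff_eq.1 ⟨e⟩
  exact Equiv.Perm.ofFn_comp_perm e f

theorem sqrt_eigenvalues₀_eq_singularValues (M : Matrix (Fin m) (Fin n) ℂ)
    (j : Fin (Fintype.card (Fin n))) :
    √((isHermitian_conjTranspose_mul_self M).eigenvalues₀ j) =
      M.toEuclideanLin.singularValues j := by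
  have hgram : (Mᴴ * M).toEuclideanLin = M.toEuclideanLin.adjoint ∘ₗ M.toEuclideanLin := by
    rw [← toEuclideanLin_conjTranspose_eq_adjoint, toLpLin_mul]
  rw [M.toEuclideanLin.singularValues_fin (finrank_euclideanSpace (ι := Fin n)) j,
    IsHermitian.eigenvalues₀]
  congr!

theorem sval_eq_singularValues (M : Matrix (Fin m) (Fin n) ℂ) (j : ℕ) :
    sval M j = M.toEuclideanLin.singularValues j := by
  let s : Fin (Fintype.card (Fin n)) → ℝ :=
    fun i => √((isHermitian_conjTranspose_mul_self M).eigenvalues₀ i)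
  have hs : Antitone s := fun _ _ h =>
    Real.sqrt_le_sqrt ((isHermitian_conjTranspose_mul_self M).eigenvalues₀_antitone h)
  have hperm : ((List.ofFn (isHermitian_conjTranspose_mul_self M).eigenvalues).map Real.sqrt).Perm
      (List.ofFn s) := by
    rw [List.map_ofFn]
    exact perm_ofFn_comp_equiv _ s
  rw [sval, ((List.perm_insertionSort _ _).trans hperm).eq_of_pairwise'
    (List.pairwise_insertionSort _ _) hs.sortedGE_ofFn.pairwise]
  rcases lt_or_ge j (Fintype.card (Fin n)) with hj | hj
  · rw [List.getD_eq_getElem _ _ (by simpa using hj), List.getElem_ofFn]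
    exact sqrt_eigenvalues₀_eq_singularValues M ⟨j, hj⟩
  · rw [List.getD_eq_default _ _ (by simpa using hj),
      M.toEuclideanLin.singularValues_of_finrank_le (by simpa using hj)]

theorem sval_mul_mul_le (X : Matrix (Fin a) (Fin m) ℂ)
    (M : Matrix (Fin m) (Fin n) ℂ) (Y : Matrix (Fin n) (Fin b) ℂ) (j : ℕ) :
    sval (X * M * Y) j ≤ ‖X‖ * sval M j * ‖Y‖ := by
  rw [sval_eq_singularValues, sval_eq_singularValues, toLpLin_mul _ 2, toLpLin_mul _ 2,
    LinearMap.comp_assoc]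
  exact singularValues_comp_comp_le X.toEuclideanLin.toContinuousLinearMap _
    Y.toEuclideanLin.toContinuousLinearMap j

theorem l2_opNorm_le_sval_zero (M : Matrix (Fin m) (Fin n) ℂ) : ‖M‖ ≤ sval M 0 := by
  rw [sval_eq_singularValues]
  exact opNorm_le_singularValues_zero M.toEuclideanLin.toContinuousLinearMap

theorem sval_nonneg (M : Matrix (Fin m) (Fin n) ℂ) (j : ℕ) : 0 ≤ sval M j :=
  sval_eq_singularValues M j ▸ M.toEuclideanLin.singularValues_nonneg j

theorem sval_of_le (M : Matrix (Fin m) (Fin n) ℂ) {j : ℕ} (hj : n ≤ j) : sval M j = 0 := by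
  rw [sval_eq_singularValues, M.toEuclideanLin.singularValues_of_finrank_le (by simpa using hj)]

theorem schatten_nonneg (p : ℝ≥0∞) (M : Matrix (Fin m) (Fin n) ℂ) : 0 ≤ schatten p M := by
  rw [schatten]
  split_ifs
  · exact sval_nonneg M 0
  · exact Real.rpow_nonneg (Finset.sum_nonneg fun j _ => Real.rpow_nonneg (sval_nonneg M j) _) _

theorem schatten_eq_sum_range (M : Matrix (Fin m) (Fin n) ℂ) {p : ℝ≥0∞} (hp : 0 < p)
    (hp_top : p ≠ ⊤) {N : ℕ} (hN : n ≤ N) :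
    schatten p M = (∑ j ∈ Finset.range N, sval M j ^ p.toReal) ^ (1 / p.toReal) := by
  rw [schatten, if_neg hp_top]
  congr 1
  refine Finset.sum_subset (Finset.range_mono hN) fun j _ hj => ?_
  rw [sval_of_le M (by simpa using hj), Real.zero_rpow (ENNReal.toReal_pos hp.ne' hp_top).ne']

theorem schatten_le_mul_of_sval_le {N : Matrix (Fin a) (Fin b) ℂ} {M : Matrix (Fin m) (Fin n) ℂ}
    {c : ℝ} (hc : 0 ≤ c) (h : ∀ j, sval N j ≤ c * sval M j) {p : ℝ≥0∞} (hp : 0 < p) :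
    schatten p N ≤ c * schatten p M := by
  obtain rfl | hp_top := eq_or_ne p ⊤
  · simpa only [schatten, if_true] using h 0
  have hp_pos : 0 < p.toReal := ENNReal.toReal_pos hp.ne' hp_top
  have hN := sval_nonneg N
  have hM := sval_nonneg M
  rw [schatten_eq_sum_range N hp hp_top (le_max_left b n),
    schatten_eq_sum_range M hp hp_top (le_max_right b n)]
  calc (∑ j ∈ Finset.range (max b n), sval N j ^ p.toReal) ^ (1 / p.toReal)
      ≤ (∑ j ∈ Finset.range (max b n), (c * sval M j) ^ p.toReal) ^ (1 / p.toReal) := by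
        gcongr with j
        · exact Finset.sum_nonneg fun j _ => Real.rpow_nonneg (hN j) _
        · exact hN j
        · exact h j
    _ = (c ^ p.toReal * ∑ j ∈ Finset.range (max b n), sval M j ^ p.toReal) ^ (1 / p.toReal) := by
        simp only [Real.mul_rpow hc (hM _), Finset.mul_sum]
    _ = c * (∑ j ∈ Finset.range (max b n), sval M j ^ p.toReal) ^ (1 / p.toReal) := by
        rw [Real.mul_rpow (by positivity) (Finset.sum_nonneg fun j _ => Real.rpow_nonneg (hM j) _),
          ← Real.rpow_mul hc, mul_one_div_cancel hp_pos.ne', Real.rpow_one]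

theorem schatten_mul_mul_le (X : Matrix (Fin a) (Fin m) ℂ) (M : Matrix (Fin m) (Fin n) ℂ)
    (Y : Matrix (Fin n) (Fin b) ℂ) {p : ℝ≥0∞} (hp : 0 < p) :
    schatten p (X * M * Y) ≤ ‖X‖ * schatten p M * ‖Y‖ := by
  rw [mul_right_comm]
  refine schatten_le_mul_of_sval_le (by positivity) (fun j => ?_) hp
  rw [mul_right_comm]
  exact sval_mul_mul_le X M Y j

end Schatten

section Filtering

variable {R k l m n s : Type*} [Fintype k] [Fintype l] [Fintype m] [Fintype n] [Fintype s]
  [DecidableEq k] [DecidableEq m] [DecidableEq n]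

theorem pow_mul_eq_mul_pow [Semiring R] {G : Matrix m m R} {M : Matrix m n R} {H : Matrix n n R}
    (h : G * M = M * H) (r : ℕ) : G ^ r * M = M * H ^ r := by
  induction r with
  | zero => simp
  | succ r ih =>
    rw [pow_succ, Matrix.mul_assoc, h, ← Matrix.mul_assoc, ih, Matrix.mul_assoc, ← pow_succ]

theorem conjTranspose_mul_pow_mul [Semiring R] [StarRing R] (A : Matrix m n R) (q : ℕ) :
    Aᴴ * ((A * Aᴴ) ^ q * A) = (Aᴴ * A) ^ (q + 1) := by
  have h : Aᴴ * A * Aᴴ = Aᴴ * (A * Aᴴ) := Matrix.mul_assoc _ _ _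
  rw [← Matrix.mul_assoc, ← pow_mul_eq_mul_pow h, Matrix.mul_assoc, ← pow_succ]

theorem isStarProjection_mul_conjTranspose [Semiring R] [StarRing R] {M : Matrix l n R}
    (hM : Mᴴ * M = 1) : IsStarProjection (M * Mᴴ) where
  isIdempotentElem := by
    rw [IsIdempotentElem, Matrix.mul_assoc, ← Matrix.mul_assoc Mᴴ, hM, Matrix.one_mul]
  isSelfAdjoint := isHermitian_mul_conjTranspose_self M

theorem diagonal_mul_diagonal_inv [DivisionSemiring R] {d : n → R} (hd : ∀ i, d i ≠ 0) :
    diagonal d * diagonal d⁻¹ = 1 := by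
  rw [diagonal_mul_diagonal, ← diagonal_one]
  exact congrArg diagonal (funext fun i => mul_inv_cancel₀ (hd i))

theorem gram_mul_eq_mul_gram_of_svd [Semiring R] [StarRing R] {A : Matrix s n R}
    {U : Matrix s m R} {D : Matrix m n R} {V : Matrix n n R} (hU : Uᴴ * U = 1) (hV : Vᴴ * V = 1)
    (hA : A = U * D * Vᴴ) : Aᴴ * A * V = V * (Dᴴ * D) := by
  calc Aᴴ * A * V = V * Dᴴ * (Uᴴ * U) * D * (Vᴴ * V) := by
        simp only [hA, conjTranspose_mul, conjTranspose_conjTranspose, Matrix.mul_assoc]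
    _ = V * (Dᴴ * D) := by rw [hU, hV, Matrix.mul_one, Matrix.mul_one, Matrix.mul_assoc]

theorem one_sub_mul_gram_pow_mul_eq_zero [Ring R] [StarRing R] {t : Type*} {A : Matrix m n R}
    {q : ℕ} {Ω : Matrix n t R} {Q : Matrix m l R} {T : Matrix l t R} {C : Matrix l k R}
    {W : Matrix n k R} (hW : Wᴴ * W = 1) (hQT : (A * Aᴴ) ^ q * A * Ω = Q * T)
    (hC : Qᴴ * A = C * Wᴴ) :
    (1 - W * Wᴴ) * ((Aᴴ * A) ^ (q + 1) * Ω) = 0 := by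
  have hAQ : Aᴴ * Q = W * Cᴴ := by simpa using congrArg conjTranspose hC
  have hrange : (Aᴴ * A) ^ (q + 1) * Ω = W * (Cᴴ * T) := by
    rw [← conjTranspose_mul_pow_mul, Matrix.mul_assoc, hQT, ← Matrix.mul_assoc, hAQ,
      Matrix.mul_assoc]
  rw [hrange, Matrix.sub_mul, Matrix.one_mul, Matrix.mul_assoc W, ← Matrix.mul_assoc Wᴴ, hW,
    Matrix.one_mul, sub_self]

/-- `H` is a filter acting as `S` and `T` on two complementary blocks of columns, and `P`
annihilates the filtered sample `H * Ω`; `Z` normalizes the `V₁`-component of the sample `Ω`. -/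
theorem mul_eq_neg_mul_of_mul_mul_eq_zero [Ring R] {P H : Matrix n n R} {V₁ : Matrix n k R}
    {V₂ : Matrix n l R} {V₁' : Matrix k n R} {V₂' : Matrix l n R} {S S' : Matrix k k R}
    {T : Matrix l l R} {Ω : Matrix n s R} {Z : Matrix s k R} (hV : V₁ * V₁' + V₂ * V₂' = 1)
    (hH₁ : H * V₁ = V₁ * S) (hH₂ : H * V₂ = V₂ * T) (hS : S * S' = 1) (hZ : V₁' * Ω * Z = 1)
    (hP : P * (H * Ω) = 0) : P * V₁ = -(P * V₂ * T * (V₂' * Ω * Z * S')) := by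
  have hfilter : H * Ω * Z = V₁ * S + V₂ * T * (V₂' * Ω * Z) := by
    calc H * Ω * Z = H * (V₁ * V₁' + V₂ * V₂') * Ω * Z := by rw [hV, Matrix.mul_one]
      _ = H * V₁ * (V₁' * Ω * Z) + H * V₂ * (V₂' * Ω * Z) := by
          simp only [Matrix.mul_add, Matrix.add_mul, Matrix.mul_assoc]
      _ = V₁ * S + V₂ * T * (V₂' * Ω * Z) := by rw [hZ, hH₁, hH₂, Matrix.mul_one]
  have hsum : P * V₁ * S + P * V₂ * T * (V₂' * Ω * Z) = 0 := by
    calc _ = P * (H * Ω * Z) := by simp only [hfilter, Matrix.mul_add, Matrix.mul_assoc]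
      _ = P * (H * Ω) * Z := (Matrix.mul_assoc _ _ _).symm
      _ = 0 := by rw [hP, Matrix.zero_mul]
  calc P * V₁ = P * V₁ * S * S' := by rw [Matrix.mul_assoc (P * V₁), hS, Matrix.mul_one]
    _ = -(P * V₂ * T * (V₂' * Ω * Z * S')) := by
        rw [eq_neg_of_add_eq_zero_left hsum, Matrix.neg_mul]
        simp only [Matrix.mul_assoc]

end Filtering

section OperatorNorm

open scoped Matrix.Norms.L2Operator

variable {𝕜 m n : Type*} [RCLike 𝕜] [Fintype m] [Fintype n] [DecidableEq n]

theorem l2_opNorm_le_one_of_conjTranspose_mul_self_eq_one {M : Matrix m n 𝕜} (hM : Mᴴ * M = 1) :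
    ‖M‖ ≤ 1 := by
  have h : ‖M‖ * ‖M‖ ≤ 1 := by
    rw [← l2_opNorm_conjTranspose_mul_self, hM]
    exact (IsStarProjection.one _).norm_le
  nlinarith [norm_nonneg M]

theorem l2_opNorm_one_sub_mul_mul_le [DecidableEq m] {k l : Type*} [Fintype k] [Fintype l]
    [DecidableEq k] [DecidableEq l] {W : Matrix m n 𝕜} {N : Matrix m k 𝕜} (hW : Wᴴ * W = 1)
    (hN : Nᴴ * N = 1) (Y : Matrix k l 𝕜) : ‖(1 - W * Wᴴ) * N * Y‖ ≤ ‖Y‖ := by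
  have hP : ‖1 - W * Wᴴ‖ ≤ 1 := (isStarProjection_mul_conjTranspose hW).one_sub.norm_le
  have hN' := l2_opNorm_le_one_of_conjTranspose_mul_self_eq_one hN
  calc ‖(1 - W * Wᴴ) * N * Y‖ ≤ ‖1 - W * Wᴴ‖ * ‖N‖ * ‖Y‖ :=
        (l2_opNorm_mul _ _).trans (by gcongr; exact l2_opNorm_mul _ _)
    _ ≤ 1 * 1 * ‖Y‖ := by gcongr
    _ = ‖Y‖ := by rw [one_mul, one_mul]

theorem l2_opNorm_gram_pow_mul_conjTranspose_le [DecidableEq m] (M : Matrix m n 𝕜) (q : ℕ) :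
    ‖(Mᴴ * M) ^ q * Mᴴ‖ ≤ ‖M‖ ^ (2 * q + 1) := by
  induction q with
  | zero => simp [l2_opNorm_conjTranspose]
  | succ q ih =>
    calc ‖(Mᴴ * M) ^ (q + 1) * Mᴴ‖ = ‖Mᴴ * M * ((Mᴴ * M) ^ q * Mᴴ)‖ := by
          rw [pow_succ', Matrix.mul_assoc (Mᴴ * M)]
      _ ≤ ‖Mᴴ * M‖ * ‖(Mᴴ * M) ^ q * Mᴴ‖ := l2_opNorm_mul _ _
      _ ≤ ‖M‖ * ‖M‖ * ‖M‖ ^ (2 * q + 1) := by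
          rw [l2_opNorm_conjTranspose_mul_self]
          gcongr
      _ = ‖M‖ ^ (2 * (q + 1) + 1) := by ring

theorem l2_opNorm_diagonal_inv_le {d : n → 𝕜} {c : ℝ} (hc : 0 < c) (hd : ∀ i, c ≤ ‖d i‖) :
    ‖diagonal d⁻¹‖ ≤ c⁻¹ := by
  rw [l2_opNorm_diagonal]
  refine (pi_norm_le_iff_of_nonneg (by positivity)).2 fun i => ?_
  rw [Pi.inv_apply, norm_inv]
  exact inv_anti₀ hc (hd i)

end OperatorNorm

section RankAndColumns

open scoped Matrix.Norms.L2Operator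

variable {a b c : ℕ}

open scoped ComplexOrder in
theorem mul_rpinv_of_rank_eq {M : Matrix (Fin a) (Fin b) ℂ} (hM : M.rank = a) :
    M * rpinv M = 1 := by
  have hunit : IsUnit (M * Mᴴ) := by
    have hrank : (M * Mᴴ).rank = a := by rw [rank_self_mul_conjTranspose, hM]
    have hrange : LinearMap.range (M * Mᴴ).mulVecLin = ⊤ :=
      Submodule.eq_top_of_finrank_eq (by rw [← Matrix.rank, hrank, Module.finrank_fin_fun])
    exact mulVec_surjective_iff_isUnit.1 (LinearMap.range_eq_top.1 hrange)
  rw [rpinv, ← Matrix.mul_assoc, mul_nonsing_inv _ ((isUnit_iff_isUnit_det _).1 hunit)]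

theorem colsL_mul_conjTranspose_add_colsR (M : Matrix (Fin a) (Fin (b + c)) ℂ) :
    colsL M * (colsL M)ᴴ + colsR M * (colsR M)ᴴ = M * Mᴴ := by
  ext i j
  simp [mul_apply, colsL, colsR, Fin.sum_univ_add]

theorem colsR_conjTranspose_mul_self {M : Matrix (Fin a) (Fin (b + c)) ℂ} (hM : Mᴴ * M = 1) :
    (colsR M)ᴴ * colsR M = 1 := by
  have h : (colsR M)ᴴ * colsR M = (Mᴴ * M).submatrix (Fin.natAdd b) (Fin.natAdd b) := rfl
  rw [h, hM, submatrix_one _ (Fin.natAdd_injective c b)]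

theorem colsL_mul_diagonal (M : Matrix (Fin a) (Fin (b + c)) ℂ) (d : Fin (b + c) → ℂ) :
    colsL (M * diagonal d) = colsL M * diagonal (d ∘ Fin.castAdd c) := by
  ext i j
  simp [colsL]

theorem colsR_mul_diagonal (M : Matrix (Fin a) (Fin (b + c)) ℂ) (d : Fin (b + c) → ℂ) :
    colsR (M * diagonal d) = colsR M * diagonal (d ∘ Fin.natAdd b) := by
  ext i j
  simp [colsR]

theorem diagRect_conjTranspose_mul_self (σ : ℕ → ℝ) (off a b : ℕ) :
    (diagRect σ off a b)ᴴ * diagRect σ off a b =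
      diagonal fun j : Fin b => if (j : ℕ) < a then (σ (off + j) : ℂ) ^ 2 else 0 := by
  ext i j
  by_cases hi : (i : ℕ) < a
  · rw [mul_apply, Finset.sum_eq_single ⟨i, hi⟩]
    · by_cases hij : i = j
      · simp [diagRect, hij, hij ▸ hi, sq]
      · simp [diagRect, hij, Fin.val_inj]
    · intro x _ hx
      simp [diagRect, show (x : ℕ) ≠ i from fun h => hx (Fin.ext h)]
    · simp
  · rw [mul_apply, Finset.sum_eq_zero]
    · simp [diagonal_apply, hi]
    · intro x _
      simp [diagRect, show (x : ℕ) ≠ i by omega]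

theorem l2_opNorm_diagRect_le {σ : ℕ → ℝ} {off : ℕ} {c : ℝ} (hσ : ∀ j, off ≤ j → |σ j| ≤ c)
    (a b : ℕ) : ‖diagRect σ off a b‖ ≤ c := by
  have hc : 0 ≤ c := (abs_nonneg _).trans (hσ off le_rfl)
  refine le_of_sq_le_sq ?_ hc
  rw [sq, ← l2_opNorm_conjTranspose_mul_self, diagRect_conjTranspose_mul_self, l2_opNorm_diagonal]
  refine (pi_norm_le_iff_of_nonneg (by positivity)).2 fun j => ?_
  split_ifs
  · rw [norm_pow, Complex.norm_real, Real.norm_eq_abs]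
    have := hσ (off + j) (Nat.le_add_right _ _)
    gcongr
  · rw [norm_zero]
    positivity

variable {m k m₂ n₂ : ℕ} {A : Matrix (Fin m) (Fin (k + n₂)) ℂ}
  {U : Matrix (Fin m) (Fin (k + m₂)) ℂ} {V : Matrix (Fin (k + n₂)) (Fin (k + n₂)) ℂ} {σ : ℕ → ℝ}

theorem gram_mul_colsL_of_svd (hU : Uᴴ * U = 1) (hV : Vᴴ * V = 1)
    (hA : A = U * diagRect σ 0 (k + m₂) (k + n₂) * Vᴴ) :
    Aᴴ * A * colsL V = colsL V * diagonal fun j : Fin k => (σ j : ℂ) ^ 2 := by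
  change colsL (Aᴴ * A * V) = _
  rw [gram_mul_eq_mul_gram_of_svd hU hV hA, diagRect_conjTranspose_mul_self, colsL_mul_diagonal]
  congr 2
  ext j
  have : (j : ℕ) < k + m₂ := by omega
  simp [this]

theorem gram_mul_colsR_of_svd (hU : Uᴴ * U = 1) (hV : Vᴴ * V = 1)
    (hA : A = U * diagRect σ 0 (k + m₂) (k + n₂) * Vᴴ) :
    Aᴴ * A * colsR V = colsR V * ((diagRect σ k m₂ n₂)ᴴ * diagRect σ k m₂ n₂) := by
  change colsR (Aᴴ * A * V) = _
  rw [gram_mul_eq_mul_gram_of_svd hU hV hA, diagRect_conjTranspose_mul_self, colsR_mul_diagonal,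
    diagRect_conjTranspose_mul_self]
  congr 2
  ext j
  simp

theorem gram_pow_mul_colsL_of_svd (hU : Uᴴ * U = 1) (hV : Vᴴ * V = 1)
    (hA : A = U * diagRect σ 0 (k + m₂) (k + n₂) * Vᴴ) (r : ℕ) :
    (Aᴴ * A) ^ r * colsL V = colsL V * diagonal fun j : Fin k => (σ j : ℂ) ^ (2 * r) := by
  rw [pow_mul_eq_mul_pow (gram_mul_colsL_of_svd hU hV hA), diagonal_pow]
  congr 2
  ext j
  exact (pow_mul _ _ _).symm

theorem one_sub_mul_colsL_eq_of_subspace_iteration {s r l q : ℕ} (hU : Uᴴ * U = 1)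
    (hV : Vᴴ * V = 1) (hA : A = U * diagRect σ 0 (k + m₂) (k + n₂) * Vᴴ)
    (hσ : ∀ j < k, σ j ≠ 0) {Ω : Matrix (Fin (k + n₂)) (Fin s) ℂ}
    (hΩ : ((colsL V)ᴴ * Ω).rank = k)
    {Q : Matrix (Fin m) (Fin r) ℂ} {R : Matrix (Fin r) (Fin s) ℂ}
    (hQR : (A * Aᴴ) ^ q * A * Ω = Q * R)
    {C : Matrix (Fin r) (Fin l) ℂ} {Vh : Matrix (Fin (k + n₂)) (Fin l) ℂ}
    (hVh : Vhᴴ * Vh = 1) (hC : Qᴴ * A = C * Vhᴴ) :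
    (1 - Vh * Vhᴴ) * colsL V =
      -((1 - Vh * Vhᴴ) * colsR V *
          (((diagRect σ k m₂ n₂)ᴴ * diagRect σ k m₂ n₂) ^ q * (diagRect σ k m₂ n₂)ᴴ)) *
        diagRect σ k m₂ n₂ *
        ((colsR V)ᴴ * Ω * rpinv ((colsL V)ᴴ * Ω) *
          diagonal (fun j : Fin k => (σ j : ℂ) ^ (2 * (q + 1)))⁻¹) := by
  have hcols : colsL V * (colsL V)ᴴ + colsR V * (colsR V)ᴴ = 1 := by
    rw [colsL_mul_conjTranspose_add_colsR, mul_eq_one_comm.1 hV]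
  have hhead := gram_pow_mul_colsL_of_svd hU hV hA (q + 1)
  have htail := pow_mul_eq_mul_pow (gram_mul_colsR_of_svd hU hV hA) (q + 1)
  have hinv := diagonal_mul_diagonal_inv (d := fun j : Fin k => (σ j : ℂ) ^ (2 * (q + 1)))
    fun j => pow_ne_zero _ (Complex.ofReal_ne_zero.2 (hσ j j.2))
  have hkill := one_sub_mul_gram_pow_mul_eq_zero hVh hQR hC
  rw [mul_eq_neg_mul_of_mul_mul_eq_zero hcols hhead htail hinv (mul_rpinv_of_rank_eq hΩ) hkill,
    pow_succ]
  simp only [Matrix.mul_assoc, Matrix.neg_mul]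

end RankAndColumns

open scoped Matrix.Norms.L2Operator in
theorem schatten_angles_right_general
    {m k m₂ n₂ s r l : ℕ} (q : ℕ)
    {A : Matrix (Fin m) (Fin (k + n₂)) ℂ}
    {U : Matrix (Fin m) (Fin (k + m₂)) ℂ}
    {V : Matrix (Fin (k + n₂)) (Fin (k + n₂)) ℂ}
    {σ : ℕ → ℝ} {τ δ : ℝ}
    (hU : Uᴴ * U = 1) (hV : Vᴴ * V = 1)
    (hA : A = U * diagRect σ 0 (k + m₂) (k + n₂) * Vᴴ)
    (hτ : 0 < τ) (hhead : ∀ j < k, τ ≤ |σ j|) (htail : ∀ j, k ≤ j → |σ j| ≤ δ)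
    {Ω : Matrix (Fin (k + n₂)) (Fin s) ℂ}
    (hΩ : ((colsL V)ᴴ * Ω).rank = k)
    {Q : Matrix (Fin m) (Fin r) ℂ} {R : Matrix (Fin r) (Fin s) ℂ}
    (hQR : (A * Aᴴ) ^ q * A * Ω = Q * R)
    {C : Matrix (Fin r) (Fin l) ℂ} {Vh : Matrix (Fin (k + n₂)) (Fin l) ℂ}
    (hVh : Vhᴴ * Vh = 1) (hC : Qᴴ * A = C * Vhᴴ)
    {p : ℝ≥0∞} (hp : 0 < p) :
    schatten p ((1 - Vh * Vhᴴ) * colsL V) ≤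
      (δ / τ) ^ (2 * q + 1) * (schatten p (diagRect σ k m₂ n₂) / τ) *
        sval ((colsR V)ᴴ * Ω * rpinv ((colsL V)ᴴ * Ω)) 0 := by
  have hσ (j : ℕ) (hj : j < k) : σ j ≠ 0 := abs_pos.1 (hτ.trans_le (hhead j hj))
  rw [one_sub_mul_colsL_eq_of_subspace_iteration hU hV hA hσ hΩ hQR hVh hC]
  set D := diagRect σ k m₂ n₂
  set W := (colsR V)ᴴ * Ω * rpinv ((colsL V)ᴴ * Ω)
  set d : Fin k → ℂ := fun j => (σ j : ℂ) ^ (2 * (q + 1))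
  have hδ : 0 ≤ δ := (abs_nonneg _).trans (htail k le_rfl)
  have hleft : ‖-((1 - Vh * Vhᴴ) * colsR V * ((Dᴴ * D) ^ q * Dᴴ))‖ ≤ δ ^ (2 * q + 1) := by
    rw [norm_neg]
    refine (l2_opNorm_one_sub_mul_mul_le hVh (colsR_conjTranspose_mul_self hV) _).trans ?_
    refine (l2_opNorm_gram_pow_mul_conjTranspose_le D q).trans ?_
    gcongr
    exact l2_opNorm_diagRect_le htail m₂ n₂
  have hright : ‖W * diagonal d⁻¹‖ ≤ sval W 0 * (τ ^ (2 * (q + 1)))⁻¹ := by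
    have hd (j : Fin k) : τ ^ (2 * (q + 1)) ≤ ‖d j‖ := by
      rw [norm_pow, Complex.norm_real, Real.norm_eq_abs]
      exact pow_le_pow_left₀ hτ.le (hhead j j.2) _
    exact (l2_opNorm_mul _ _).trans (mul_le_mul (l2_opNorm_le_sval_zero W)
      (l2_opNorm_diagonal_inv_le (pow_pos hτ _) hd) (norm_nonneg _) (sval_nonneg W 0))
  have hD := schatten_nonneg p D
  calc schatten p (-((1 - Vh * Vhᴴ) * colsR V * ((Dᴴ * D) ^ q * Dᴴ)) * D * (W * diagonal d⁻¹))
      ≤ ‖-((1 - Vh * Vhᴴ) * colsR V * ((Dᴴ * D) ^ q * Dᴴ))‖ * schatten p D *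
          ‖W * diagonal d⁻¹‖ := schatten_mul_mul_le _ D _ hp
    _ ≤ δ ^ (2 * q + 1) * schatten p D * (sval W 0 * (τ ^ (2 * (q + 1)))⁻¹) := by gcongr
    _ = (δ / τ) ^ (2 * q + 1) * (schatten p D / τ) * sval W 0 := by
        rw [div_pow]
        field_simp
        ring

/-- Theorem 3.3 (right): Schatten-p norm bound for the sines of the canonical angles
between the column spaces of `V_k` and `V̂`. -/
theorem schatten_angles_right
    {k m₂ n₂ ρ : ℕ} (q : ℕ) (hk : 1 ≤ k)
    (A : Matrix (Fin (k + m₂)) (Fin (k + n₂)) ℂ)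
    (U : Matrix (Fin (k + m₂)) (Fin (k + m₂)) ℂ)
    (V : Matrix (Fin (k + n₂)) (Fin (k + n₂)) ℂ)
    (σ : ℕ → ℝ)
    (hU : Uᴴ * U = 1) (hU' : U * Uᴴ = 1)
    (hV : Vᴴ * V = 1) (hV' : V * Vᴴ = 1)
    (hσ0 : ∀ i, 0 ≤ σ i) (hσm : ∀ i j, i ≤ j → σ j ≤ σ i)
    (hA : A = U * diagRect σ 0 (k + m₂) (k + n₂) * Vᴴ)
    (hrank : 0 < σ (k - 1)) (hgap : σ k < σ (k - 1))
    (Ω : Matrix (Fin (k + n₂)) (Fin (k + ρ)) ℂ)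
    (hΩ : ((colsL V)ᴴ * Ω).rank = k)
    (Q : Matrix (Fin (k + m₂)) (Fin (k + ρ)) ℂ)
    (R : Matrix (Fin (k + ρ)) (Fin (k + ρ)) ℂ)
    (hQ : Qᴴ * Q = 1) (hR : R.BlockTriangular id)
    (hQR : (A * Aᴴ) ^ q * A * Ω = Q * R)
    (UB : Matrix (Fin (k + ρ)) (Fin (k + ρ)) ℂ)
    (Vh : Matrix (Fin (k + n₂)) (Fin (k + ρ)) ℂ)
    (σh : ℕ → ℝ)
    (hUB : UBᴴ * UB = 1) (hUB' : UB * UBᴴ = 1)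
    (hVh : Vhᴴ * Vh = 1)
    (hσh0 : ∀ i, 0 ≤ σh i) (hσhm : ∀ i j, i ≤ j → σh j ≤ σh i)
    (hB : Qᴴ * A = UB * diagRect σh 0 (k + ρ) (k + ρ) * Vhᴴ)
    :
    ∀ p : ℝ≥0∞, 1 ≤ p →
      schatten p ((1 - Vh * Vhᴴ) * colsL V) ≤
        (σ k / σ (k - 1)) ^ (2 * q + 1) * (schatten p (diagRect σ k m₂ n₂) / σ (k - 1)) * sval ((colsR V)ᴴ * Ω * rpinv ((colsL V)ᴴ * Ω)) 0 := by
  intro p hp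
  exact schatten_angles_right_general q hU hV hA hrank
    (fun j hj => (hσm j (k - 1) (by omega)).trans (le_abs_self _))
    (fun j hj => (abs_of_nonneg (hσ0 j)).trans_le (hσm k j hj)) hΩ hQR hVh hB
    (zero_lt_one.trans_le hp)
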